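/- Let M be an acyclic matching on the graph G(C•) of the chain complex C•. Then g ∘ f is chain homotopic to the identity of C• via the homotopy χ: for every i ≥ 0 and every c ∈ X_i, (g_i ∘ f_i − id)(c) = (∂_{i+1} ∘ χ_i + χ_{i−1} ∘ ∂_i)(c). -/

import Mathlib

/-!
Algebraic Discrete Morse theory (Jöllenbeck–Welker).

Setup: `R` is a (possibly noncommutative) ring and `C` is a chain complex of free
left `R`-modules `C i = X i → R` with fixed finite basis `X i` in homological
degree `i`; the differential is `∂ i (c) = ∑ c', d i c c' • c'` (we record only the
matrix of coefficients `d`).  `M` is a matching on the associated weighted directed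
graph, `MStep` describes the edges of the modified graph `G_M`, `MPath` the directed
paths, `Gamma v w` the sum of the weights of all paths from `v` to `w`, `Crit` the
critical basis elements, `DMmap` the Morse differential, and `fmap`, `gmap`, `chimap`
the comparison maps and the homotopy.
-/

attribute [local instance] Classical.propDecidable

noncomputable section

section ADMT

variable {R : Type} [Ring R]
variable (X : ℕ → Type) [∀ i, Fintype (X i)]
variable (d : ∀ i, X (i + 1) → X i → R)
variable (M : ∀ i, Set (X (i + 1) × X i))

/-- The family of coefficients `d` of the differentials satisfies `∂ ∘ ∂ = 0`,
i.e. `C` is a chain complex. -/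
def IsComplexAux : Prop :=
  ∀ (i : ℕ) (c : X (i + 2)) (c'' : X i),
    ∑ c' : X (i + 1), d (i + 1) c c' * d i c' c'' = 0

/-- The edges of the modified graph `G_M`: downward steps along non-matched edges
of the graph `G(C)` (weight `d i c c'`), and upward reversed steps along matched
edges (weight `-(d i c c')⁻¹`). -/
inductive MStep : (Σ i, X i) → (Σ i, X i) → Prop
  | down (i : ℕ) (c : X (i + 1)) (c' : X i) (hne : d i c c' ≠ 0)
      (hnm : (c, c') ∉ M i) : MStep ⟨i + 1, c⟩ ⟨i, c'⟩
  | up (i : ℕ) (c : X (i + 1)) (c' : X i) (hmem : (c, c') ∈ M i) :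
      MStep ⟨i, c'⟩ ⟨i + 1, c⟩

/-- `M` is an acyclic matching: all edges of `M` are edges of the graph `G(C)`,
every vertex lies in at most one edge of `M`, the weights of matched edges are
central units of `R`, and the modified graph `G_M` has no directed cycle. -/
def IsAcyclicMatching : Prop :=
  (∀ (i : ℕ) (c : X (i + 1)) (c' : X i), (c, c') ∈ M i → d i c c' ≠ 0) ∧
  (∀ (i : ℕ) (c : X (i + 1)) (c₁ c₂ : X i), (c, c₁) ∈ M i → (c, c₂) ∈ M i → c₁ = c₂) ∧
  (∀ (i : ℕ) (c₁ c₂ : X (i + 1)) (c' : X i), (c₁, c') ∈ M i → (c₂, c') ∈ M i → c₁ = c₂) ∧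
  (∀ (i : ℕ) (a : X (i + 2)) (b : X (i + 1)) (c : X i),
      (a, b) ∈ M (i + 1) → (b, c) ∈ M i → False) ∧
  (∀ (i : ℕ) (c : X (i + 1)) (c' : X i), (c, c') ∈ M i →
      d i c c' ∈ Set.center R ∧ IsUnit (d i c c')) ∧
  (∀ v : Σ i, X i, ¬ Relation.TransGen (MStep X d M) v v)

/-- Directed paths in the modified graph `G_M`. -/
inductive MPath : (Σ i, X i) → (Σ i, X i) → Type
  | nil (v : Σ i, X i) : MPath v v
  | down (i : ℕ) (c : X (i + 1)) (c' : X i) (hne : d i c c' ≠ 0)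
      (hnm : (c, c') ∉ M i) (w : Σ i, X i) (p : MPath ⟨i, c'⟩ w) :
      MPath ⟨i + 1, c⟩ w
  | up (i : ℕ) (c : X (i + 1)) (c' : X i) (hmem : (c, c') ∈ M i)
      (w : Σ i, X i) (p : MPath ⟨i + 1, c⟩ w) : MPath ⟨i, c'⟩ w

/-- The weight of a path: the product of the weights of its edges.  A non-matched
edge `c → c'` has weight `d i c c'`; a reversed matched edge has weight
`-(d i c c')⁻¹`. -/
def MPath.weight : ∀ {v w : Σ i, X i}, MPath X d M v w → R
  | _, _, .nil _ => 1
  | _, _, .down i c c' _ _ _ p => d i c c' * MPath.weight p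
  | _, _, .up i c c' _ _ p => -(Ring.inverse (d i c c')) * MPath.weight p

/-- The first step of the path decreases the homological degree. -/
def MPath.firstDown : ∀ {v w : Σ i, X i}, MPath X d M v w → Prop
  | _, _, .nil _ => False
  | _, _, .down _ _ _ _ _ _ _ => True
  | _, _, .up _ _ _ _ _ _ => False

/-- The first step of the path increases the homological degree. -/
def MPath.firstUp : ∀ {v w : Σ i, X i}, MPath X d M v w → Prop
  | _, _, .nil _ => False
  | _, _, .down _ _ _ _ _ _ _ => False
  | _, _, .up _ _ _ _ _ _ => True

/-- `Γ(v,w)`: the sum of the weights of all directed paths from `v` to `w` in `G_M`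
(under the acyclicity hypothesis there are only finitely many such paths). -/
def Gamma (v w : Σ i, X i) : R := ∑ᶠ p : MPath X d M v w, MPath.weight X d M p

/-- `Γ↓(v,w)`: the sum of the weights of all paths from `v` to `w` whose first step
decreases the homological degree. -/
def GammaDown (v w : Σ i, X i) : R :=
  ∑ᶠ (p : MPath X d M v w) (_ : MPath.firstDown X d M p), MPath.weight X d M p

/-- `Γ↑(v,w)`: the sum of the weights of all paths from `v` to `w` whose first step
increases the homological degree. -/
def GammaUp (v w : Σ i, X i) : R :=
  ∑ᶠ (p : MPath X d M v w) (_ : MPath.firstUp X d M p), MPath.weight X d M p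

/-- A basis element is critical if it lies in no edge of `M`. -/
def CriticalV (v : Σ i, X i) : Prop :=
  ∀ (j : ℕ) (a : X (j + 1)) (b : X j), (a, b) ∈ M j →
    v ≠ ⟨j + 1, a⟩ ∧ v ≠ ⟨j, b⟩

/-- The critical basis elements of homological degree `i`. -/
abbrev Crit (i : ℕ) := {c : X i // CriticalV X M ⟨i, c⟩}

/-- The `R`-linear map between free left `R`-modules determined by a matrix of
coefficients. -/
def liftMap {α β : Type} [Fintype α] (w : α → β → R) :
    (α → R) →ₗ[R] (β → R) where
  toFun v b := ∑ a, v a * w a b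
  map_add' u v := by
    funext b
    simp [add_mul, Finset.sum_add_distrib]
  map_smul' r v := by
    funext b
    simp [Finset.mul_sum, mul_assoc]

/-- The differential `∂` of the original complex `C`. -/
def Dmap (i : ℕ) : (X (i + 1) → R) →ₗ[R] (X i → R) :=
  liftMap (fun c c' => d i c c')

/-- The Morse differential `∂^M (c) = ∑ Γ(c,c') • c'` on the critical cells. -/
def DMmap (i : ℕ) : (Crit X M (i + 1) → R) →ₗ[R] (Crit X M i → R) :=
  liftMap (fun c c' => Gamma X d M ⟨i + 1, c.1⟩ ⟨i, c'.1⟩)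

/-- The comparison map `f : C → C^M`, `f(c) = ∑ Γ(c,c') • c'`. -/
def fmap (i : ℕ) : (X i → R) →ₗ[R] (Crit X M i → R) :=
  liftMap (fun c c' => Gamma X d M ⟨i, c⟩ ⟨i, c'.1⟩)

/-- The comparison map `g : C^M → C`, `g(c) = ∑ Γ(c,c') • c'`. -/
def gmap (i : ℕ) : (Crit X M i → R) →ₗ[R] (X i → R) :=
  liftMap (fun c c' => Gamma X d M ⟨i, c.1⟩ ⟨i, c'⟩)

/-- The homotopy `χ : C_i → C_{i+1}`, `χ(c) = ∑ Γ(c,c') • c'`. -/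
def chimap (i : ℕ) : (X i → R) →ₗ[R] (X (i + 1) → R) :=
  liftMap (fun c c' => Gamma X d M ⟨i, c⟩ ⟨i + 1, c'⟩)

/-- `v` is the lower end of a matched edge. -/
def LowV (v : Σ i, X i) : Prop := ∃ a : X (v.1 + 1), (a, v.2) ∈ M v.1

/-- `v` is the upper end of a matched edge. -/
def UpV (v : Σ i, X i) : Prop :=
  ∃ (j : ℕ) (a : X (j + 1)) (b : X j), (a, b) ∈ M j ∧ v = ⟨j + 1, a⟩

theorem upV_not_lowV (hM : IsAcyclicMatching X d M) (v : Σ i, X i) (h : UpV X M v) :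
    ¬ LowV X M v := by
  obtain ⟨j, a, b, hab, rfl⟩ := h
  rintro ⟨e, he⟩
  exact hM.2.2.2.1 j e a b he hab

theorem path_degree (hM : IsAcyclicMatching X d M) {v w : Σ i, X i} (p : MPath X d M v w) :
    w.1 ≤ v.1 + 1 ∧ (w.1 = v.1 + 1 → LowV X M v ∧ UpV X M w) ∧
      (w.1 = v.1 → ¬ LowV X M v → v = w ∨ UpV X M w) := by
  induction p with
  | nil v => exact ⟨by omega, fun h => by omega, fun _ _ => Or.inl rfl⟩
  | down i c c' hne hnm w p ih =>
    obtain ⟨h1, h2, h3⟩ := ih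
    dsimp only at *
    refine ⟨by omega, fun h => by omega, fun h _ => Or.inr (h2 h).2⟩
  | up i c c' hmem w p ih =>
    obtain ⟨h1, h2, h3⟩ := ih
    dsimp only at *
    have hup : UpV X M ⟨i + 1, c⟩ := ⟨i, c, c', hmem, rfl⟩
    have hnl := upV_not_lowV X d M hM _ hup
    have hlow : LowV X M ⟨i, c'⟩ := ⟨c, hmem⟩
    have h4 : w.1 ≠ i + 1 + 1 := fun h => hnl (h2 h).1
    refine ⟨by omega, fun h => ⟨hlow, ?_⟩, fun _ h => absurd hlow h⟩
    rcases h3 h hnl with h5 | h5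
    · rw [← h5]; exact hup
    · exact h5

theorem path_of_reach {v w : Σ i, X i} (h : Relation.ReflTransGen (MStep X d M) v w) :
    Nonempty (MPath X d M v w) := by
  induction h using Relation.ReflTransGen.head_induction_on with
  | refl => exact ⟨.nil _⟩
  | head h _ ih =>
    obtain ⟨p⟩ := ih
    cases h with
    | down i c c' hne hnm => exact ⟨.down i c c' hne hnm _ p⟩
    | up i c c' hmem => exact ⟨.up i c c' hmem _ p⟩

/-- First-step decomposition of paths starting in degree `0`. -/
def pathEquivZero (c : X 0) (w : Σ i, X i) :
    MPath X d M ⟨0, c⟩ w ≃ PLift ((⟨0, c⟩ : Σ i, X i) = w) ⊕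
      (Σ a : {a : X 1 // (a, c) ∈ M 0}, MPath X d M ⟨1, a.1⟩ w) where
  toFun p := match p with
    | .nil _ => .inl ⟨rfl⟩
    | .up _ a _ h _ p => .inr ⟨⟨a, h⟩, p⟩
  invFun s := match s with
    | .inl h => h.down ▸ .nil _
    | .inr ⟨a, p⟩ => .up 0 a.1 c a.2 w p
  left_inv p := by cases p <;> rfl
  right_inv s := by
    rcases s with ⟨⟨h⟩⟩ | ⟨a, p⟩
    · subst h; rfl
    · rfl

/-- First-step decomposition of paths starting in positive degree. -/
def pathEquivSucc (i : ℕ) (c : X (i + 1)) (w : Σ i, X i) :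
    MPath X d M ⟨i + 1, c⟩ w ≃ PLift ((⟨i + 1, c⟩ : Σ i, X i) = w) ⊕
      ((Σ b : {b : X i // d i c b ≠ 0 ∧ (c, b) ∉ M i}, MPath X d M ⟨i, b.1⟩ w) ⊕
      (Σ a : {a : X (i + 2) // (a, c) ∈ M (i + 1)}, MPath X d M ⟨i + 2, a.1⟩ w)) where
  toFun p := match p with
    | .nil _ => .inl ⟨rfl⟩
    | .down _ _ b h h' _ p => .inr (.inl ⟨⟨b, h, h'⟩, p⟩)
    | .up _ a _ h _ p => .inr (.inr ⟨⟨a, h⟩, p⟩)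
  invFun s := match s with
    | .inl h => h.down ▸ .nil _
    | .inr (.inl ⟨b, p⟩) => .down i c b.1 b.2.1 b.2.2 w p
    | .inr (.inr ⟨a, p⟩) => .up (i + 1) a.1 c a.2 w p
  left_inv p := by cases p <;> rfl
  right_inv s := by
    rcases s with ⟨⟨h⟩⟩ | ⟨b, p⟩ | ⟨a, p⟩
    · subst h; rfl
    · rfl
    · rfl

theorem finite_path (hM : IsAcyclicMatching X d M) (v w : Σ i, X i) :
    Finite (MPath X d M v w) := by
  let r : (Σ i, X i) → (Σ i, X i) → Prop := fun x y => Relation.TransGen (MStep X d M) y x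
  have : IsTrans _ r := ⟨fun a b c h1 h2 => Relation.TransGen.trans h2 h1⟩
  have : Std.Irrefl r := ⟨fun a h => hM.2.2.2.2.2 a h⟩
  have : IsStrictOrder _ r := {}
  let s : Set (Σ i, X i) := {x | Relation.ReflTransGen (MStep X d M) v x}
  have hs : s.Finite := by
    have : s ⊆ ⋃ i ∈ Set.Iic (v.1 + 1), Set.range (fun c : X i => (⟨i, c⟩ : Σ i, X i)) := by
      intro x hx
      obtain ⟨p⟩ := path_of_reach X d M hx
      simp only [Set.mem_iUnion]
      exact ⟨x.1, (path_degree X d M hM p).1, x.2, rfl⟩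
    exact ((Set.finite_Iic _).biUnion fun i _ => Set.finite_range _).subset this
  have hwf : s.WellFoundedOn r := hs.wellFoundedOn
  refine hwf.induction (x := v) (P := fun x => Finite (MPath X d M x w))
    (show v ∈ s from Relation.ReflTransGen.refl) ?_
  rintro ⟨i, c⟩ hy ih
  have key : ∀ z, MStep X d M ⟨i, c⟩ z → Finite (MPath X d M z w) := fun z hz =>
    ih z (Relation.ReflTransGen.tail hy hz) (Relation.TransGen.single hz)
  cases i with
  | zero =>
    have : ∀ a : {a : X 1 // (a, c) ∈ M 0}, Finite (MPath X d M ⟨1, a.1⟩ w) := fun a =>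
      key _ (.up 0 _ _ a.2)
    exact Finite.of_equiv _ (pathEquivZero X d M c w).symm
  | succ i =>
    have : ∀ a : {a : X (i + 2) // (a, c) ∈ M (i + 1)}, Finite (MPath X d M ⟨i + 2, a.1⟩ w) :=
      fun a => key _ (.up _ _ _ a.2)
    have : ∀ b : {b : X i // d i c b ≠ 0 ∧ (c, b) ∉ M i}, Finite (MPath X d M ⟨i, b.1⟩ w) :=
      fun b => key _ (.down _ _ _ b.2.1 b.2.2)
    exact Finite.of_equiv _ (pathEquivSucc X d M i c w).symm

/-- The boundary of `v` paired with a function on vertices. -/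
def bdry (φ : (Σ i, X i) → R) : (Σ i, X i) → R
  | ⟨0, _⟩ => 0
  | ⟨i + 1, c⟩ => ∑ b, d i c b * φ ⟨i, b⟩

/-- The unmatched part of the boundary. -/
def bdry0 (φ : (Σ i, X i) → R) : (Σ i, X i) → R
  | ⟨0, _⟩ => 0
  | ⟨i + 1, c⟩ => ∑ b, (if (c, b) ∈ M i then 0 else d i c b) * φ ⟨i, b⟩

theorem sum_subtype_ite {α : Type} [Fintype α] (P : α → Prop) (φ : α → R) [Fintype {a // P a}] :
    ∑ a : {a // P a}, φ a.1 = ∑ a, if P a then φ a else 0 := by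
  rw [← Finset.sum_filter]
  exact (Finset.sum_subtype _ (by simp) φ).symm

theorem gamma_step (hM : IsAcyclicMatching X d M) (i : ℕ) (c : X i) (w : Σ i, X i) :
    Gamma X d M ⟨i, c⟩ w = (if (⟨i, c⟩ : Σ i, X i) = w then 1 else 0)
      + bdry0 X d M (fun v => Gamma X d M v w) ⟨i, c⟩
      + ∑ a : X (i + 1), if (a, c) ∈ M i then
          -(Ring.inverse (d i a c)) * Gamma X d M ⟨i + 1, a⟩ w else 0 := by
  have := finite_path X d M hM
  letI : ∀ v w, Fintype (MPath X d M v w) := fun v w => Fintype.ofFinite _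
  have hG : ∀ v w, Gamma X d M v w = ∑ p : MPath X d M v w, MPath.weight X d M p := fun v w => by
    rw [Gamma, finsum_eq_sum_of_fintype]
  have hnil : ∀ v : Σ i, X i, ∑ h : PLift (v = w),
      MPath.weight X d M (h.down ▸ MPath.nil (d := d) (M := M) v : MPath X d M v w)
      = if v = w then 1 else 0 := by
    intro v
    split_ifs with h
    · subst h
      have : Unique (PLift (v = v)) := ⟨⟨⟨rfl⟩⟩, fun _ => rfl⟩
      rw [Fintype.sum_unique]
      rfl
    · have : IsEmpty (PLift (v = w)) := ⟨fun x => h x.down⟩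
      simp
  rw [← sum_subtype_ite (fun a => (a, c) ∈ M i)
    (fun a => -(Ring.inverse (d i a c)) * Gamma X d M ⟨i + 1, a⟩ w)]
  cases i with
  | zero =>
    rw [hG, ← (pathEquivZero X d M c w).symm.sum_comp, Fintype.sum_sum_type,
      Fintype.sum_sigma]
    simp only [hG, bdry0, add_zero, Finset.mul_sum]
    rw [← hnil]
    rfl
  | succ i =>
    rw [hG, ← (pathEquivSucc X d M i c w).symm.sum_comp, Fintype.sum_sum_type,
      Fintype.sum_sum_type, Fintype.sum_sigma, Fintype.sum_sigma]
    refine Eq.trans ?_ (add_assoc _ _ _).symm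
    congr 1
    · rw [← hnil]; rfl
    congr 1
    · have : bdry0 X d M (fun v => Gamma X d M v w) ⟨i + 1, c⟩ =
          ∑ b : {b : X i // d i c b ≠ 0 ∧ (c, b) ∉ M i}, d i c b.1 * Gamma X d M ⟨i, b.1⟩ w := by
        rw [sum_subtype_ite (fun b => d i c b ≠ 0 ∧ (c, b) ∉ M i)
          (fun b => d i c b * Gamma X d M ⟨i, b⟩ w)]
        refine Finset.sum_congr rfl fun b _ => ?_
        by_cases h1 : (c, b) ∈ M i <;> by_cases h2 : d i c b = 0 <;> simp [h1, h2]
      rw [this]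
      simp only [hG, Finset.mul_sum]
      rfl
    · simp only [hG, Finset.mul_sum]
      rfl

theorem gamma_eq_zero (v w : Σ i, X i) (h : MPath X d M v w → False) :
    Gamma X d M v w = 0 := by
  have : IsEmpty (MPath X d M v w) := ⟨h⟩
  exact finsum_of_isEmpty _

theorem gamma_not_low (hM : IsAcyclicMatching X d M) (i : ℕ) (c : X i) (w : Σ i, X i)
    (h : ¬ LowV X M ⟨i, c⟩) :
    Gamma X d M ⟨i, c⟩ w = (if (⟨i, c⟩ : Σ i, X i) = w then 1 else 0)
      + bdry0 X d M (fun v => Gamma X d M v w) ⟨i, c⟩ := by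
  rw [gamma_step X d M hM, Finset.sum_eq_zero, add_zero]
  intro a _
  rw [if_neg fun h' => h ⟨a, h'⟩]

/-- Two-step recursion for a lower matched vertex, target not of smaller degree. -/
theorem gamma_low (hM : IsAcyclicMatching X d M) (i : ℕ) (c : X i) (a : X (i + 1))
    (hac : (a, c) ∈ M i) (w : Σ i, X i) (hw : ¬ (w.1 = i ∧ UpV X M w) ∧ i ≤ w.1)
    (hne : (⟨i, c⟩ : Σ i, X i) ≠ w) :
    Gamma X d M ⟨i, c⟩ w = -(Ring.inverse (d i a c)) *
      ((if (⟨i + 1, a⟩ : Σ i, X i) = w then 1 else 0)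
      + ∑ b, (if (a, b) ∈ M i then 0 else d i a b) * Gamma X d M ⟨i, b⟩ w) := by
  have hup : UpV X M ⟨i + 1, a⟩ := ⟨i, a, c, hac, rfl⟩
  have h0 : bdry0 X d M (fun v => Gamma X d M v w) ⟨i, c⟩ = 0 := by
    cases i with
    | zero => rfl
    | succ i =>
      refine Finset.sum_eq_zero fun b _ => ?_
      dsimp only
      rw [gamma_eq_zero X d M ⟨i, b⟩ w, mul_zero]
      intro p
      obtain ⟨h1, h2, h3⟩ := path_degree X d M hM p
      dsimp only at *
      exact hw.1 ⟨by omega, (h2 (by omega)).2⟩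
  rw [gamma_step X d M hM, if_neg hne, h0, zero_add, zero_add,
    Finset.sum_eq_single a, if_pos hac, gamma_not_low X d M hM _ _ _ (upV_not_lowV X d M hM _ hup)]
  · rfl
  · intro a' _ ha'
    rw [if_neg fun h => ha' (hM.2.2.1 i a' a c h hac)]
  · simp

theorem bdry_split (hM : IsAcyclicMatching X d M) (i : ℕ) (a : X (i + 1)) (c : X i)
    (hac : (a, c) ∈ M i) (φ : X i → R) :
    ∑ b, d i a b * φ b = d i a c * φ c + ∑ b, (if (a, b) ∈ M i then 0 else d i a b) * φ b := by
  have : d i a c * φ c = ∑ b, if b = c then d i a b * φ b else 0 := by simp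
  rw [this, ← Finset.sum_add_distrib]
  refine Finset.sum_congr rfl fun b _ => ?_
  by_cases h : b = c
  · subst h; simp [hac]
  · have : (a, b) ∉ M i := fun h' => h (hM.2.1 i a b c h' hac)
    simp [h, this]

theorem dd_zero (hC : IsComplexAux X d) (i : ℕ) (a : X (i + 1)) (φ : (Σ i, X i) → R) :
    ∑ b, d i a b * bdry X d φ ⟨i, b⟩ = 0 := by
  cases i with
  | zero => simp [bdry]
  | succ i =>
    simp only [bdry, Finset.mul_sum, ← mul_assoc]
    rw [Finset.sum_comm]
    refine Finset.sum_eq_zero fun e _ => ?_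
    rw [← Finset.sum_mul, hC, zero_mul]

theorem crit_not_up (v : Σ i, X i) (h : CriticalV X M v) : ¬ UpV X M v := by
  rintro ⟨j, a, b, hab, rfl⟩
  exact (h j a b hab).1 rfl

theorem crit_not_low (v : Σ i, X i) (h : CriticalV X M v) : ¬ LowV X M v := by
  rintro ⟨a, ha⟩
  exact (h _ a _ ha).2 rfl

theorem main_entry (hC : IsComplexAux X d) (hM : IsAcyclicMatching X d M) (i : ℕ)
    (c e : X i) :
    ∑ k : Crit X M i, Gamma X d M ⟨i, c⟩ ⟨i, k.1⟩ * Gamma X d M ⟨i, k.1⟩ ⟨i, e⟩ =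
      (if c = e then 1 else 0) + ∑ a, Gamma X d M ⟨i, c⟩ ⟨i + 1, a⟩ * d i a e
      + bdry X d (fun v => Gamma X d M v ⟨i, e⟩) ⟨i, c⟩ := by
  let r : X i → X i → Prop := fun x y => Relation.TransGen (MStep X d M) ⟨i, y⟩ ⟨i, x⟩
  have : IsTrans _ r := ⟨fun a b c h1 h2 => Relation.TransGen.trans h2 h1⟩
  have : Std.Irrefl r := ⟨fun a h => hM.2.2.2.2.2 _ h⟩
  have hwf : WellFounded r := Finite.wellFounded_of_trans_of_irrefl r
  induction c using hwf.induction with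
  | _ c ih =>
  by_cases hlow : LowV X M ⟨i, c⟩
  · obtain ⟨a, hac⟩ := hlow
    dsimp only at a hac
    have hunit := (hM.2.2.2.2.1 i a c hac).2
    set u := d i a c with hu
    set q : X i → R := fun b => if (a, b) ∈ M i then 0 else d i a b with hq
    have hF : ∀ k : Crit X M i, Gamma X d M ⟨i, c⟩ ⟨i, k.1⟩ =
        -(Ring.inverse u) * ∑ b, q b * Gamma X d M ⟨i, b⟩ ⟨i, k.1⟩ := by
      intro k
      rw [gamma_low X d M hM i c a hac _ ⟨fun h => crit_not_up X M _ k.2 h.2, le_rfl⟩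
        (fun h => crit_not_low X M _ k.2 (h ▸ ⟨a, hac⟩)), if_neg, zero_add]
      intro h
      have := congrArg Sigma.fst h
      simp at this
    have hchi : ∀ x : X (i + 1), Gamma X d M ⟨i, c⟩ ⟨i + 1, x⟩ =
        -(Ring.inverse u) * ((if a = x then 1 else 0)
          + ∑ b, q b * Gamma X d M ⟨i, b⟩ ⟨i + 1, x⟩) := by
      intro x
      rw [gamma_low X d M hM i c a hac _ ⟨fun h => by simpa using h.1, by simp⟩
        (fun h => by simpa using congrArg Sigma.fst h)]
      simp [hq, hu]
    have hFG : ∑ k : Crit X M i, Gamma X d M ⟨i, c⟩ ⟨i, k.1⟩ * Gamma X d M ⟨i, k.1⟩ ⟨i, e⟩ =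
        -(Ring.inverse u) * ∑ b, q b * ∑ k : Crit X M i,
          Gamma X d M ⟨i, b⟩ ⟨i, k.1⟩ * Gamma X d M ⟨i, k.1⟩ ⟨i, e⟩ := by
      simp only [hF, Finset.mul_sum, Finset.sum_mul, mul_assoc]
      rw [Finset.sum_comm]
    have hXD : ∑ x, Gamma X d M ⟨i, c⟩ ⟨i + 1, x⟩ * d i x e =
        -(Ring.inverse u) * (d i a e
          + ∑ b, q b * ∑ x, Gamma X d M ⟨i, b⟩ ⟨i + 1, x⟩ * d i x e) := by
      have : d i a e = ∑ x, (if a = x then 1 else 0) * d i x e := by simp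
      rw [this]
      simp only [hchi, mul_assoc, ← Finset.mul_sum, add_mul, Finset.sum_add_distrib,
        Finset.sum_mul]
      rw [Finset.sum_comm]
      simp only [mul_assoc, ← Finset.mul_sum]
    have hih : ∀ b, q b * ∑ k : Crit X M i,
          Gamma X d M ⟨i, b⟩ ⟨i, k.1⟩ * Gamma X d M ⟨i, k.1⟩ ⟨i, e⟩ =
        q b * (if b = e then 1 else 0)
          + q b * ∑ x, Gamma X d M ⟨i, b⟩ ⟨i + 1, x⟩ * d i x e
          + q b * bdry X d (fun v => Gamma X d M v ⟨i, e⟩) ⟨i, b⟩ := by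
      intro b
      by_cases hqb : q b = 0
      · simp [hqb]
      · rw [← mul_add, ← mul_add, ih b]
        have h1 : (a, b) ∉ M i := fun h => hqb (by simp [hq, h])
        have h2 : d i a b ≠ 0 := fun h => hqb (by simp [hq, h])
        exact (Relation.TransGen.single (MStep.up i a c hac)).tail (MStep.down i a b h2 h1)
    have hd1 := bdry_split X d M hM i a c hac (fun b => if b = e then 1 else 0)
    have hd2 := bdry_split X d M hM i a c hac
      (fun b => bdry X d (fun v => Gamma X d M v ⟨i, e⟩) ⟨i, b⟩)
    rw [dd_zero X d hC] at hd2
    have hd1' : d i a e = u * (if c = e then 1 else 0)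
        + ∑ b, q b * (if b = e then 1 else 0) := by
      rw [← hd1]; simp
    have hinv : ∀ z : R, Ring.inverse u * (u * z) = z := fun z => by
      rw [← mul_assoc, Ring.inverse_mul_cancel _ hunit, one_mul]
    have hd2' : ∑ b, q b * bdry X d (fun v => Gamma X d M v ⟨i, e⟩) ⟨i, b⟩ =
        - (u * bdry X d (fun v => Gamma X d M v ⟨i, e⟩) ⟨i, c⟩) :=
      eq_neg_of_add_eq_zero_right hd2.symm
    rw [hFG, hXD]
    simp only [hih, Finset.sum_add_distrib]
    rw [hd2', hd1']
    simp only [mul_add, neg_mul, mul_neg, hinv, neg_neg]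
    abel
  · have hchi : ∀ x : X (i + 1), Gamma X d M ⟨i, c⟩ ⟨i + 1, x⟩ = 0 := fun x =>
      gamma_eq_zero X d M _ _ fun p => hlow ((path_degree X d M hM p).2.1 rfl).1
    have hFne : ∀ k : Crit X M i, k.1 ≠ c → Gamma X d M ⟨i, c⟩ ⟨i, k.1⟩ = 0 := fun k hk =>
      gamma_eq_zero X d M _ _ fun p => by
        rcases (path_degree X d M hM p).2.2 rfl hlow with h | h
        · simp at h; exact hk h.symm
        · exact crit_not_up X M _ k.2 h
    simp only [hchi, zero_mul, Finset.sum_const_zero, add_zero]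
    by_cases hup : UpV X M ⟨i, c⟩
    · have hz : ∀ k : Crit X M i, Gamma X d M ⟨i, c⟩ ⟨i, k.1⟩ = 0 := fun k =>
        hFne k fun h => crit_not_up X M _ k.2 (h ▸ hup)
      simp only [hz, zero_mul, Finset.sum_const_zero]
      obtain ⟨j, a, b, hab, h⟩ := hup
      obtain rfl : i = j + 1 := congrArg Sigma.fst h
      obtain rfl : c = a := by simpa using h
      have hunit := (hM.2.2.2.2.1 j c b hab).2
      rw [bdry, bdry_split X d M hM j c b hab (fun b => Gamma X d M ⟨j, b⟩ ⟨j + 1, e⟩),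
        gamma_low X d M hM j b c hab _ ⟨fun h => by simpa using h.1, by simp⟩
        (fun h => by simpa using congrArg Sigma.fst h), ← mul_assoc, mul_neg,
        Ring.mul_inverse_cancel _ hunit]
      simp
    · have hcrit : CriticalV X M ⟨i, c⟩ := by
        intro j a b hab
        refine ⟨fun h => hup ⟨j, a, b, hab, h⟩, fun h => hlow ?_⟩
        rw [h]; exact ⟨a, hab⟩
      have hb : ∀ w, bdry0 X d M (fun v => Gamma X d M v w) ⟨i, c⟩ =
          bdry X d (fun v => Gamma X d M v w) ⟨i, c⟩ := by
        intro w
        cases i with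
        | zero => rfl
        | succ i =>
          refine Finset.sum_congr rfl fun b _ => ?_
          rw [if_neg fun h => hup ⟨i, c, b, h, rfl⟩]
      have h1 : Gamma X d M ⟨i, c⟩ ⟨i, c⟩ = 1 := by
        rw [gamma_not_low X d M hM _ _ _ hlow, if_pos rfl]
        cases i with
        | zero => simp [bdry0]
        | succ i =>
          rw [bdry0, Finset.sum_eq_zero, add_zero]
          intro b _
          rw [gamma_eq_zero X d M ⟨i, b⟩, mul_zero]
          exact fun p => hup ((path_degree X d M hM p).2.1 rfl).2
      rw [Finset.sum_eq_single (⟨c, hcrit⟩ : Crit X M i)]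
      · dsimp only
        rw [h1, one_mul, gamma_not_low X d M hM _ _ _ hlow, hb]
        simp
      · intro k _ hk
        rw [hFne k fun h => hk (Subtype.ext h), zero_mul]
      · simp

/-- Lemma B.3 (H1).  If `M` is an acyclic matching on the graph
`G(C)` of the chain complex `C`, then `g ∘ f` is chain homotopic to the identity of
`C` via the homotopy `χ`: in degree `0` one has `g ∘ f - id = ∂_1 ∘ χ_0` (as `∂_0 = 0`),
and in degree `i + 1` one has `g ∘ f - id = ∂_{i+2} ∘ χ_{i+1} + χ_i ∘ ∂_{i+1}`. -/
theorem gmap_comp_fmap_homotopic_id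
    (hC : IsComplexAux X d) (hM : IsAcyclicMatching X d M) :
    (gmap X d M 0 ∘ₗ fmap X d M 0 - LinearMap.id = Dmap X d 0 ∘ₗ chimap X d M 0) ∧
    (∀ i, gmap X d M (i + 1) ∘ₗ fmap X d M (i + 1) - LinearMap.id =
        Dmap X d (i + 1) ∘ₗ chimap X d M (i + 1) + chimap X d M i ∘ₗ Dmap X d i) := by
  have hcomp : ∀ {α β γ : Type} [Fintype α] [Fintype β] (w : α → β → R) (w' : β → γ → R),
      liftMap w' ∘ₗ liftMap w = liftMap (fun a c => ∑ b, w a b * w' b c) := by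
    intro α β γ _ _ w w'
    refine LinearMap.ext fun v => funext fun c => ?_
    simp only [LinearMap.comp_apply, liftMap, LinearMap.coe_mk, AddHom.coe_mk,
      Finset.sum_mul, Finset.mul_sum, mul_assoc]
    exact Finset.sum_comm
  have hid : ∀ {α : Type} [Fintype α],
      (LinearMap.id : (α → R) →ₗ[R] (α → R)) = liftMap (fun a b => if a = b then 1 else 0) := by
    intro α _
    refine LinearMap.ext fun v => funext fun c => ?_
    simp [liftMap]
  have hadd : ∀ {α β : Type} [Fintype α] (w w' : α → β → R),
      liftMap w + liftMap w' = liftMap (fun a b => w a b + w' a b) := by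
    intro α β _ w w'
    refine LinearMap.ext fun v => funext fun c => ?_
    simp [liftMap, mul_add, Finset.sum_add_distrib]
  refine ⟨?_, fun i => ?_⟩
  · rw [sub_eq_iff_eq_add, gmap, fmap, Dmap, chimap, hcomp, hcomp, hid, hadd]
    congr 1
    funext c e
    rw [main_entry X d M hC hM, bdry, add_zero, add_comm]
  · rw [sub_eq_iff_eq_add, gmap, fmap, Dmap, Dmap, chimap, chimap, hcomp, hcomp, hcomp, hid,
      hadd, hadd]
    congr 1
    funext c e
    rw [main_entry X d M hC hM, bdry]
    abel

end ADMT

end
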